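/- Integration by parts formula for the wetting measure with a strip (Proposition 3.1, with the correct free-endpoint boundary term): for every f ∈ C¹_b(ℝ^N) and every h ∈ ℝ^N (with the conventions h_0 := 0 and h_{N+1} := 0), the map b ↦ σ^N_i(f|b) is continuously differentiable on [0,∞) for each i, and ∫_{ℝ₊^N} ∂_h f(φ) ℙ^f_{φ_a,N}(dφ) = Σ_{i=1}^N h_i ( ∫_0^a e^{φ_a(b)} (d/db) σ^N_i(f|b) db − σ^N_i(f|a) ) − ∫_{ℝ₊^N} f(φ) [ Σ_{i=1}^N φ_i (h_{i+1} + h_{i−1} − 2h_i) + φ_N h_N ] ℙ^f_{φ_a,N}(dφ). -/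

import Mathlib

open MeasureTheory

noncomputable section

/-- Extension of a configuration `φ ∈ ℝ^N` (indexed so that `φ ⟨i-1,_⟩` is the paper's `φ_i`,
`1 ≤ i ≤ N`) to all of `ℕ`, with the conventions `φ_0 = 0` and `φ_j = 0` for `j > N`. -/
def pad {N : ℕ} (φ : Fin N → ℝ) : ℕ → ℝ :=
  fun j => if hj : 1 ≤ j ∧ j ≤ N then φ ⟨j - 1, by omega⟩ else 0

/-- The Gaussian gradient weight `ρ(φ) = exp(−Σ_{i=0}^{N−1} (φ_{i+1} − φ_i)²/2)`, `φ_0 = 0`. -/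
def gaussianWeight {N : ℕ} (φ : Fin N → ℝ) : ℝ :=
  Real.exp (-∑ j ∈ Finset.range N, (pad φ (j + 1) - pad φ j) ^ 2 / 2)

/-- The wetting measure with a strip: the measure on `ℝ₊^N` with density
`Z⁻¹ ρ(φ) ∏_{i=1}^N e^{φa(φ_i)}` with respect to Lebesgue measure on `ℝ₊^N`. -/
def wettingMeasure (N : ℕ) (φa : ℝ → ℝ) (Z : ℝ) : Measure (Fin N → ℝ) :=
  (Measure.pi fun _ : Fin N => volume.restrict (Set.Ici 0)).withDensity
    fun φ => ENNReal.ofReal (Z⁻¹ * (gaussianWeight φ * ∏ i, Real.exp (φa (φ i))))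

instance (N : ℕ) (i : Fin N) (b : ℝ) (n : Fin N) :
    SigmaFinite (if n = i then Measure.dirac b else volume.restrict (Set.Ici 0)) := by
  split <;> infer_instance

/-- The conditioned quantity
`σ^N_i(f|b) = Z⁻¹ ∫ f(φ) ρ(φ) ∏_{n≠i} e^{φa(φ_n)} dφ_n` with `φ_i = b`, realized as an
integral against the product of the Dirac mass at `b` in coordinate `i` and Lebesgue
measure on `[0,∞)` in the other coordinates. -/
def sigmaInt (N : ℕ) (φa : ℝ → ℝ) (Z : ℝ) (i : Fin N) (f : (Fin N → ℝ) → ℝ) (b : ℝ) : ℝ :=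
  Z⁻¹ * ∫ φ, f φ * gaussianWeight φ * ∏ n ∈ Finset.univ.erase i, Real.exp (φa (φ n))
    ∂(Measure.pi fun n => if n = i then Measure.dirac b else volume.restrict (Set.Ici 0))

/-- Domination by a Gaussian: `|F φ| ≤ K exp(-c |φ|²)` for some `c > 0`. -/
def GaussianBounded {ι : Type*} [Fintype ι] (F : (ι → ℝ) → ℝ) : Prop :=
  ∃ K c : ℝ, 0 < c ∧ ∀ φ, |F φ| ≤ K * Real.exp (-c * ∑ i, φ i ^ 2)

/-- Lebesgue measure on the orthant `[0,∞)^ι`. -/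
abbrev orthantMeasure (ι : Type*) [Fintype ι] : Measure (ι → ℝ) :=
  Measure.pi fun _ : ι => (volume : Measure ℝ).restrict (Set.Ici 0)

lemma integrable_exp_neg_mul_sum_sq {ι : Type*} [Fintype ι] {c : ℝ} (hc : 0 < c) :
    Integrable (fun φ : ι → ℝ => Real.exp (-c * ∑ i, φ i ^ 2)) (orthantMeasure ι) := by
  have := Integrable.fintype_prod (ι := ι) (μ := fun _ => (volume : Measure ℝ).restrict (Set.Ici 0))
    (f := fun _ x => Real.exp (-c * x ^ 2))
    (fun _ => (integrable_exp_neg_mul_sq hc).restrict)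
  simpa only [← Real.exp_sum, ← Finset.mul_sum] using this

lemma GaussianBounded.integrable {ι : Type*} [Fintype ι] {F : (ι → ℝ) → ℝ}
    (hF : GaussianBounded F) (hc : Continuous F) : Integrable F (orthantMeasure ι) := by
  obtain ⟨K, c, hc0, hb⟩ := hF
  exact ((integrable_exp_neg_mul_sum_sq hc0).const_mul K).mono' hc.aestronglyMeasurable
    (.of_forall hb)

lemma GaussianBounded.bound_nonneg {ι : Type*} [Fintype ι] {F : (ι → ℝ) → ℝ} {K c : ℝ}
    (hb : ∀ φ, |F φ| ≤ K * Real.exp (-c * ∑ i, φ i ^ 2)) : 0 ≤ K := by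
  have := (abs_nonneg _).trans (hb 0)
  simpa using this

lemma GaussianBounded.add {ι : Type*} [Fintype ι] {F G : (ι → ℝ) → ℝ}
    (hF : GaussianBounded F) (hG : GaussianBounded G) : GaussianBounded (fun φ => F φ + G φ) := by
  obtain ⟨K, c, hc, hb⟩ := hF
  obtain ⟨L, d, hd, hb'⟩ := hG
  refine ⟨K + L, min c d, lt_min hc hd, fun φ => ?_⟩
  have hK := bound_nonneg hb
  have hL := bound_nonneg hb'
  have hS : 0 ≤ ∑ i, φ i ^ 2 := Finset.sum_nonneg fun i _ => sq_nonneg _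
  refine (abs_add_le _ _).trans ?_
  rw [add_mul]
  refine add_le_add ((hb φ).trans ?_) ((hb' φ).trans ?_)
  · gcongr
    exact min_le_left _ _
  · gcongr
    exact min_le_right _ _

lemma GaussianBounded.mul_of_bounded {ι : Type*} [Fintype ι] {F w : (ι → ℝ) → ℝ}
    (hF : GaussianBounded F) {M : ℝ} (hw : ∀ φ, |w φ| ≤ M) :
    GaussianBounded (fun φ => F φ * w φ) := by
  obtain ⟨K, c, hc, hb⟩ := hF
  refine ⟨K * M, c, hc, fun φ => ?_⟩
  have hK := bound_nonneg hb
  rw [abs_mul, mul_right_comm]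
  exact mul_le_mul (hb φ) (hw φ) (abs_nonneg _) (by positivity)

/-- A Gaussian absorbs functions of linear growth. -/
lemma GaussianBounded.mul_of_linear_growth {ι : Type*} [Fintype ι] {F w : (ι → ℝ) → ℝ}
    (hF : GaussianBounded F) {A : ℝ} (hw : ∀ φ, |w φ| ≤ A * (1 + ‖φ‖)) :
    GaussianBounded (fun φ => w φ * F φ) := by
  obtain ⟨K, c, hc, hb⟩ := hF
  have hK := bound_nonneg hb
  have hA : 0 ≤ A := by
    have := (abs_nonneg _).trans (hw 0)
    simpa using this
  refine ⟨A * (2 + 2 / c) * K, c / 2, by positivity, fun φ => ?_⟩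
  set S := ∑ i, φ i ^ 2 with hSdef
  have hS : 0 ≤ S := Finset.sum_nonneg fun i _ => sq_nonneg _
  have hn : ‖φ‖ ≤ 1 + S := by
    refine (pi_norm_le_iff_of_nonneg (by positivity)).2 fun i => ?_
    have : φ i ^ 2 ≤ S :=
      Finset.single_le_sum (f := fun i => φ i ^ 2) (fun i _ => sq_nonneg _) (Finset.mem_univ i)
    rw [Real.norm_eq_abs]
    nlinarith [sq_abs (φ i), sq_nonneg (|φ i| - 1)]
  have he : 1 + ‖φ‖ ≤ (2 + 2 / c) * Real.exp (c / 2 * S) := by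
    have h1 : c / 2 * S + 1 ≤ Real.exp (c / 2 * S) := Real.add_one_le_exp _
    have h2 : (2 + 2 / c) * (c / 2 * S + 1) = c * S + 2 + S + 2 / c := by
      field_simp; ring
    have h3 : (2 + 2 / c) * (c / 2 * S + 1) ≤ (2 + 2 / c) * Real.exp (c / 2 * S) := by gcongr
    have : 0 ≤ c * S := by positivity
    have : 0 ≤ 2 / c := by positivity
    linarith
  calc |w φ * F φ| = |w φ| * |F φ| := abs_mul _ _
    _ ≤ (A * ((2 + 2 / c) * Real.exp (c / 2 * S))) * (K * Real.exp (-c * S)) := by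
      refine mul_le_mul ((hw φ).trans ?_) (hb φ) (abs_nonneg _) (by positivity)
      gcongr
    _ = A * (2 + 2 / c) * K * (Real.exp (c / 2 * S) * Real.exp (-c * S)) := by ring
    _ = A * (2 + 2 / c) * K * Real.exp (-(c / 2) * S) := by
      rw [← Real.exp_add]; ring_nf

lemma sum_sq_insertNth {n : ℕ} (i : Fin (n + 1)) (b : ℝ) (y : Fin n → ℝ) :
    ∑ j, i.insertNth (α := fun _ => ℝ) b y j ^ 2 = b ^ 2 + ∑ j, y j ^ 2 := by
  rw [Fin.sum_univ_succAbove _ i]; simp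

lemma continuous_insertNth_left {n : ℕ} (i : Fin (n + 1)) (y : Fin n → ℝ) :
    Continuous fun b : ℝ => i.insertNth (α := fun _ => ℝ) b y :=
  Continuous.finInsertNth (A := fun _ => ℝ) i continuous_id continuous_const

lemma continuous_insertNth_right {n : ℕ} (i : Fin (n + 1)) (b : ℝ) :
    Continuous fun y : Fin n → ℝ => i.insertNth (α := fun _ => ℝ) b y :=
  Continuous.finInsertNth (A := fun _ => ℝ) i continuous_const continuous_id

lemma hasDerivAt_insertNth {n : ℕ} (i : Fin (n + 1)) (y : Fin n → ℝ) (b : ℝ) :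
    HasDerivAt (fun b : ℝ => i.insertNth (α := fun _ => ℝ) b y) (Pi.single i 1) b := by
  refine hasDerivAt_pi.2 fun j => ?_
  induction j using i.succAboveCases with
  | x => simpa using hasDerivAt_id' b
  | p j => simpa [Fin.succAbove_ne] using hasDerivAt_const b (y j)

/-- Fubini: splitting off one coordinate of an integral over the orthant. -/
lemma integral_orthant_succ {n : ℕ} (i : Fin (n + 1)) {F : (Fin (n + 1) → ℝ) → ℝ}
    (hF : Integrable F (orthantMeasure (Fin (n + 1)))) :
    ∫ φ, F φ ∂(orthantMeasure (Fin (n + 1))) =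
      ∫ b in Set.Ici (0 : ℝ), ∫ y, F (i.insertNth b y) ∂(orthantMeasure (Fin n)) := by
  have hmp := (measurePreserving_piFinSuccAbove
    (fun _ : Fin (n + 1) => (volume : Measure ℝ).restrict (Set.Ici 0)) i).symm
  rw [← hmp.integral_comp' F, integral_prod]
  · rfl
  · exact (hmp.integrable_comp_emb (MeasurableEquiv.measurableEmbedding _)).2 hF

/-- Integration against a product measure with a Dirac mass in one coordinate. -/
lemma integral_pi_dirac {n : ℕ} (i : Fin (n + 1)) (b : ℝ) {F : (Fin (n + 1) → ℝ) → ℝ}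
    (hF : Continuous F) :
    ∫ φ, F φ ∂(Measure.pi fun k =>
        if k = i then Measure.dirac b else (volume : Measure ℝ).restrict (Set.Ici 0)) =
      ∫ y, F (i.insertNth b y) ∂(orthantMeasure (Fin n)) := by
  have hmp := (measurePreserving_piFinSuccAbove (fun k : Fin (n + 1) =>
    if k = i then Measure.dirac b else (volume : Measure ℝ).restrict (Set.Ici 0)) i).symm
  rw [← hmp.integral_comp' F]
  simp only [if_true, Fin.succAbove_ne, if_false]
  rw [Measure.dirac_prod, integral_map (by fun_prop)]
  · rfl
  · refine Measurable.aestronglyMeasurable ?_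
    exact hF.measurable.comp (MeasurableEquiv.measurable _)

section OneCoordinate

variable {n : ℕ} (i : Fin (n + 1)) {G G' : (Fin (n + 1) → ℝ) → ℝ}

lemma GaussianBounded.exists_slice_bound (hG : GaussianBounded G) :
    ∃ K c : ℝ, 0 < c ∧ 0 ≤ K ∧ ∀ b (y : Fin n → ℝ),
      |G (i.insertNth b y)| ≤ K * Real.exp (-c * b ^ 2) * Real.exp (-c * ∑ j, y j ^ 2) := by
  obtain ⟨K, c, hc, hb⟩ := hG
  refine ⟨K, c, hc, bound_nonneg hb, fun b y => (hb _).trans_eq ?_⟩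
  rw [sum_sq_insertNth, mul_assoc, ← Real.exp_add, mul_add]

lemma GaussianBounded.exists_slice_uniform_bound (hG : GaussianBounded G) :
    ∃ g : (Fin n → ℝ) → ℝ, Integrable g (orthantMeasure (Fin n)) ∧
      ∀ b y, ‖G (i.insertNth b y)‖ ≤ g y := by
  obtain ⟨K, c, hc, hK, hb⟩ := hG.exists_slice_bound i
  refine ⟨_, (integrable_exp_neg_mul_sum_sq hc).const_mul K, fun b y => (hb b y).trans ?_⟩
  have : Real.exp (-c * b ^ 2) ≤ 1 := Real.exp_le_one_iff.2 (by nlinarith [sq_nonneg b])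
  have := mul_le_of_le_one_right hK this
  gcongr

lemma GaussianBounded.exists_abs_integral_slice_le (hG : GaussianBounded G) :
    ∃ K c : ℝ, 0 < c ∧ ∀ b, |∫ y, G (i.insertNth b y) ∂(orthantMeasure (Fin n))| ≤
      K * Real.exp (-c * b ^ 2) := by
  obtain ⟨K, c, hc, hK, hb⟩ := hG.exists_slice_bound i
  refine ⟨K * ∫ y : Fin n → ℝ, Real.exp (-c * ∑ j, y j ^ 2) ∂(orthantMeasure (Fin n)), c, hc,
    fun b => ?_⟩
  refine (norm_integral_le_of_norm_le (f := fun y => G (i.insertNth b y))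
    ((integrable_exp_neg_mul_sum_sq (ι := Fin n) hc).const_mul (K * Real.exp (-c * b ^ 2)))
    (.of_forall (hb b))).trans_eq ?_
  rw [integral_const_mul]; ring

lemma continuous_integral_slice (hG : GaussianBounded G) (hGc : Continuous G) :
    Continuous fun b => ∫ y, G (i.insertNth b y) ∂(orthantMeasure (Fin n)) := by
  obtain ⟨g, hg, hb⟩ := hG.exists_slice_uniform_bound i
  exact continuous_of_dominated
    (fun b => (hGc.comp (continuous_insertNth_right i b)).aestronglyMeasurable)
    (fun b => .of_forall (hb b)) hg
    (.of_forall fun y => hGc.comp (continuous_insertNth_left i y))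

lemma integrable_integral_slice (hG : GaussianBounded G) (hGc : Continuous G) :
    Integrable fun b => ∫ y, G (i.insertNth b y) ∂(orthantMeasure (Fin n)) := by
  obtain ⟨K, c, hc, hb⟩ := hG.exists_abs_integral_slice_le i
  exact ((integrable_exp_neg_mul_sq hc).const_mul K).mono'
    (continuous_integral_slice i hG hGc).aestronglyMeasurable (.of_forall hb)

lemma tendsto_integral_slice (hG : GaussianBounded G) :
    Filter.Tendsto (fun b => ∫ y, G (i.insertNth b y) ∂(orthantMeasure (Fin n)))
      Filter.atTop (nhds 0) := by
  obtain ⟨K, c, hc, hb⟩ := hG.exists_abs_integral_slice_le i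
  refine squeeze_zero_norm hb ?_
  have h1 : Filter.Tendsto (fun b : ℝ => -c * b ^ 2) Filter.atTop Filter.atBot :=
    (Filter.tendsto_pow_atTop two_ne_zero).const_mul_atTop_of_neg (neg_neg_of_pos hc)
  simpa using (Real.tendsto_exp_atBot.comp h1).const_mul K

lemma hasDerivAt_integral_slice (hG : GaussianBounded G) (hGc : Continuous G)
    (hG' : GaussianBounded G') (hGc' : Continuous G')
    (hderiv : ∀ b (y : Fin n → ℝ),
      HasDerivAt (fun b => G (i.insertNth b y)) (G' (i.insertNth b y)) b) (b : ℝ) :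
    HasDerivAt (fun b => ∫ y, G (i.insertNth b y) ∂(orthantMeasure (Fin n)))
      (∫ y, G' (i.insertNth b y) ∂(orthantMeasure (Fin n))) b := by
  obtain ⟨g, hg, hb⟩ := hG.exists_slice_uniform_bound i
  obtain ⟨g', hg', hb'⟩ := hG'.exists_slice_uniform_bound i
  have hmeas {F : (Fin (n + 1) → ℝ) → ℝ} (hF : Continuous F) (b : ℝ) :
      AEStronglyMeasurable (fun y => F (i.insertNth b y)) (orthantMeasure (Fin n)) :=
    (hF.comp (continuous_insertNth_right i b)).aestronglyMeasurable
  exact (hasDerivAt_integral_of_dominated_loc_of_deriv_le (s := Set.univ) (bound := g')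
    Filter.univ_mem (.of_forall (hmeas hGc))
    (hg.mono' (hmeas hGc b) (.of_forall (hb b))) (hmeas hGc' b)
    (.of_forall fun y x _ => hb' x y) hg' (.of_forall fun y x _ => hderiv x y)).2

/-- One-dimensional integration by parts against a weight equal to `1` beyond `a`. -/
lemma integral_weight_mul_deriv (hG : GaussianBounded G) (hGc : Continuous G)
    (hG' : GaussianBounded G') (hGc' : Continuous G')
    (hderiv : ∀ b (y : Fin n → ℝ),
      HasDerivAt (fun b => G (i.insertNth b y)) (G' (i.insertNth b y)) b)
    {w : ℝ → ℝ} (hw : Continuous w) {M : ℝ} (hM : ∀ x, |w x| ≤ M)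
    {a : ℝ} (ha : 0 ≤ a) (hwa : ∀ x, a < x → w x = 1) :
    ∫ φ, G' φ * w (φ i) ∂(orthantMeasure (Fin (n + 1))) =
      (∫ b in (0 : ℝ)..a, w b * ∫ y, G' (i.insertNth b y) ∂(orthantMeasure (Fin n))) -
        ∫ y, G (i.insertNth a y) ∂(orthantMeasure (Fin n)) := by
  set S' : ℝ → ℝ := fun b => ∫ y, G' (i.insertNth b y) ∂(orthantMeasure (Fin n)) with hS'
  have hS'int : Integrable S' := integrable_integral_slice i hG' hGc'
  have hwS' : Integrable fun b => w b * S' b :=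
    hS'int.bdd_mul hw.aestronglyMeasurable (.of_forall hM)
  have htail : ∫ b in Set.Ioi a, w b * S' b =
      -∫ y, G (i.insertNth a y) ∂(orthantMeasure (Fin n)) := by
    rw [setIntegral_congr_fun measurableSet_Ioi
      (fun b hb => by simp only [hwa b hb, one_mul] : Set.EqOn (fun b => w b * S' b) S' _),
      integral_Ioi_of_hasDerivAt_of_tendsto (f' := S')
        (continuous_integral_slice i hG hGc).continuousWithinAt
        (fun b _ => hasDerivAt_integral_slice i hG hGc hG' hGc' hderiv b)
        hS'int.integrableOn (tendsto_integral_slice i hG), zero_sub]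
  have hint : Integrable (fun φ => G' φ * w (φ i)) (orthantMeasure (Fin (n + 1))) :=
    (hG'.mul_of_bounded (w := fun φ => w (φ i)) fun φ => hM _).integrable (by fun_prop)
  rw [integral_orthant_succ i hint, integral_Ici_eq_integral_Ioi]
  simp only [Fin.insertNth_apply_same, integral_mul_const]
  simp only [mul_comm _ (w _)]
  rw [sub_eq_add_neg, ← htail, intervalIntegral.integral_of_le ha,
    ← setIntegral_union (by simp [Set.disjoint_left]) measurableSet_Ioi hwS'.integrableOn
      hwS'.integrableOn, Set.Ioc_union_Ioi_eq_Ioi ha]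

end OneCoordinate

/-- The bilinear form of discrete gradients, `Σ_{j<N} (φ_{j+1} − φ_j)(h_{j+1} − h_j)`. -/
def gradForm {N : ℕ} (φ h : Fin N → ℝ) : ℝ :=
  ∑ j ∈ Finset.range N, (pad φ (j + 1) - pad φ j) * (pad h (j + 1) - pad h j)

lemma pad_zero {N : ℕ} (φ : Fin N → ℝ) : pad φ 0 = 0 := by simp [pad]

lemma pad_val_succ {N : ℕ} (φ : Fin N → ℝ) (i : Fin N) : pad φ (i.1 + 1) = φ i := by
  have : i.1 + 1 ≤ N := i.2
  simp [pad, this]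

lemma pad_of_lt {N : ℕ} (φ : Fin N → ℝ) {j : ℕ} (hj : N < j) : pad φ j = 0 := by
  simp [pad, hj]

lemma abs_pad_le {N : ℕ} (φ : Fin N → ℝ) (j : ℕ) : |pad φ j| ≤ ‖φ‖ := by
  unfold pad
  split
  · exact norm_le_pi_norm φ _
  · simp

@[fun_prop]
lemma continuous_pad {N : ℕ} (j : ℕ) : Continuous fun φ : Fin N → ℝ => pad φ j := by
  unfold pad
  split <;> fun_prop

lemma pad_eq_sum {N : ℕ} (h : Fin N → ℝ) (j : ℕ) :
    pad h j = ∑ i, h i * pad (Pi.single i 1) j := by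
  unfold pad
  split <;> simp [Pi.single_apply]

lemma hasDerivAt_pad_insertNth {n : ℕ} (i : Fin (n + 1)) (y : Fin n → ℝ) (j : ℕ) (b : ℝ) :
    HasDerivAt (fun b => pad (i.insertNth (α := fun _ => ℝ) b y) j) (pad (Pi.single i 1) j) b := by
  unfold pad
  split
  · exact hasDerivAt_pi.1 (hasDerivAt_insertNth i y b) _
  · exact hasDerivAt_const _ _

@[fun_prop]
lemma continuous_gaussianWeight {N : ℕ} : Continuous (gaussianWeight (N := N)) := by
  unfold gaussianWeight
  fun_prop

@[fun_prop]
lemma continuous_gradForm_left {N : ℕ} (h : Fin N → ℝ) : Continuous fun φ => gradForm φ h := by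
  unfold gradForm
  fun_prop

lemma gradForm_eq_sum {N : ℕ} (φ h : Fin N → ℝ) :
    gradForm φ h = ∑ i, h i * gradForm φ (Pi.single i 1) := by
  simp only [gradForm, Finset.mul_sum]
  rw [Finset.sum_comm]
  refine Finset.sum_congr rfl fun j _ => ?_
  rw [pad_eq_sum h (j + 1), pad_eq_sum h j, ← Finset.sum_sub_distrib, Finset.mul_sum]
  exact Finset.sum_congr rfl fun i _ => by ring

lemma abs_gradForm_le {N : ℕ} (φ h : Fin N → ℝ) : |gradForm φ h| ≤ N * (4 * ‖h‖) * (1 + ‖φ‖) := by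
  have hsub (ψ : Fin N → ℝ) (j : ℕ) : |pad ψ (j + 1) - pad ψ j| ≤ 2 * ‖ψ‖ := by
    linarith [abs_sub (pad ψ (j + 1)) (pad ψ j), abs_pad_le ψ (j + 1), abs_pad_le ψ j]
  calc |gradForm φ h| ≤ ∑ _j ∈ Finset.range N, (2 * (1 + ‖φ‖)) * (2 * ‖h‖) := by
        refine (Finset.abs_sum_le_sum_abs _ _).trans (Finset.sum_le_sum fun j _ => ?_)
        rw [abs_mul]
        exact mul_le_mul ((hsub φ j).trans (by linarith)) (hsub h j) (abs_nonneg _) (by positivity)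
    _ = N * (4 * ‖h‖) * (1 + ‖φ‖) := by
        rw [Finset.sum_const, Finset.card_range, nsmul_eq_mul]; ring

lemma sum_range_grad_mul_grad (p q : ℕ → ℝ) (hp : p 0 = 0) (N : ℕ) :
    ∑ j ∈ Finset.range N, (p (j + 1) - p j) * (q (j + 1) - q j) =
      p N * (q (N + 1) - q N) -
        ∑ j ∈ Finset.range N, p (j + 1) * (q (j + 2) + q j - 2 * q (j + 1)) := by
  induction N with
  | zero => simp [hp]
  | succ N ih => rw [Finset.sum_range_succ, Finset.sum_range_succ, ih]; ring

/-- Discrete Green formula with a free right endpoint. -/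
lemma neg_gradForm_eq {n : ℕ} (φ h : Fin (n + 1) → ℝ) :
    -gradForm φ h = (∑ i : Fin (n + 1), φ i * (pad h (i.1 + 2) + pad h i.1 - 2 * pad h (i.1 + 1)))
      + φ (Fin.last n) * h (Fin.last n) := by
  have hφ : pad φ (n + 1) = φ (Fin.last n) := pad_val_succ φ (Fin.last n)
  have hh : pad h (n + 1) = h (Fin.last n) := pad_val_succ h (Fin.last n)
  rw [gradForm, sum_range_grad_mul_grad _ _ (pad_zero φ), pad_of_lt h (Nat.lt_succ_self _), hφ, hh,
    Finset.sum_range]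
  simp only [pad_val_succ φ]
  ring

lemma hasDerivAt_gaussianWeight_insertNth {n : ℕ} (i : Fin (n + 1)) (y : Fin n → ℝ) (b : ℝ) :
    HasDerivAt (fun b => gaussianWeight (i.insertNth (α := fun _ => ℝ) b y))
      (-gradForm (i.insertNth (α := fun _ => ℝ) b y) (Pi.single i 1) *
        gaussianWeight (i.insertNth (α := fun _ => ℝ) b y)) b := by
  have hsum := HasDerivAt.fun_sum (u := Finset.range (n + 1)) fun j _ =>
    (((hasDerivAt_pad_insertNth i y (j + 1) b).sub (hasDerivAt_pad_insertNth i y j b)).pow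
      2).div_const 2
  refine hsum.neg.exp.congr_deriv ?_
  rw [gaussianWeight, mul_comm, gradForm]
  congr 2
  refine Finset.sum_congr rfl fun j _ => ?_
  simp
  ring

lemma sq_pad_le {N : ℕ} (φ : Fin N → ℝ) {k : ℕ} (hk : k ≤ N) :
    pad φ k ^ 2 ≤ N * ∑ j ∈ Finset.range N, (pad φ (j + 1) - pad φ j) ^ 2 := by
  have htel : pad φ k = ∑ j ∈ Finset.range k, (pad φ (j + 1) - pad φ j) := by
    rw [Finset.sum_range_sub, pad_zero, sub_zero]
  rw [htel]
  refine sq_sum_le_card_mul_sum_sq.trans ?_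
  rw [Finset.card_range]
  have := Finset.sum_le_sum_of_subset_of_nonneg (Finset.range_subset_range.2 hk)
    fun j _ _ => sq_nonneg (pad φ (j + 1) - pad φ j)
  have h0 : 0 ≤ ∑ j ∈ Finset.range k, (pad φ (j + 1) - pad φ j) ^ 2 :=
    Finset.sum_nonneg fun j _ => sq_nonneg _
  have : (k : ℝ) ≤ N := by exact_mod_cast hk
  gcongr

lemma gaussianBounded_gaussianWeight {n : ℕ} :
    GaussianBounded (gaussianWeight (N := n + 1)) := by
  refine ⟨1, 1 / (2 * (n + 1 : ℝ) ^ 2), by positivity, fun φ => ?_⟩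
  rw [gaussianWeight, abs_of_pos (Real.exp_pos _), one_mul, Real.exp_le_exp, ← Finset.sum_div]
  have hsum : ∑ i, φ i ^ 2 ≤ ∑ _i : Fin (n + 1),
      ((n + 1 : ℕ) : ℝ) * ∑ j ∈ Finset.range (n + 1), (pad φ (j + 1) - pad φ j) ^ 2 :=
    Finset.sum_le_sum fun i _ => by
      have := sq_pad_le φ (k := i.1 + 1) i.2
      rwa [pad_val_succ] at this
  rw [Finset.sum_const, Finset.card_univ, Fintype.card_fin, nsmul_eq_mul] at hsum
  push_cast at hsum
  rw [neg_mul, neg_le_neg_iff, one_div, inv_mul_le_iff₀ (by positivity)]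
  linarith

/-- A function with bounded derivative has linear growth. -/
lemma exists_linear_growth {E : Type*} [NormedAddCommGroup E] [NormedSpace ℝ E] {f : E → ℝ}
    (hf : Differentiable ℝ f) {C : ℝ} (hC : ∀ x, ‖fderiv ℝ f x‖ ≤ C) :
    ∃ A : ℝ, ∀ x, |f x| ≤ A * (1 + ‖x‖) := by
  refine ⟨|f 0| + C, fun x => ?_⟩
  have hC0 : 0 ≤ C := (norm_nonneg _).trans (hC 0)
  have h1 := convex_univ.norm_image_sub_le_of_norm_fderiv_le (𝕜 := ℝ) (f := f)
    (fun y _ => hf y) (fun y _ => hC y) (Set.mem_univ 0) (Set.mem_univ x)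
  rw [sub_zero, Real.norm_eq_abs] at h1
  have h2 := abs_sub_abs_le_abs_sub (f x) (f 0)
  have := mul_nonneg (abs_nonneg (f 0)) (norm_nonneg x)
  nlinarith

lemma integral_wettingMeasure {N : ℕ} {φa : ℝ → ℝ} (hφa : Continuous φa) {Z : ℝ} (hZ : 0 ≤ Z)
    (F : (Fin N → ℝ) → ℝ) :
    ∫ φ, F φ ∂(wettingMeasure N φa Z) =
      Z⁻¹ * ∫ φ, F φ * (gaussianWeight φ * ∏ i, Real.exp (φa (φ i))) ∂(orthantMeasure (Fin N)) := by
  have hcont : Continuous fun φ : Fin N → ℝ =>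
      Z⁻¹ * (gaussianWeight φ * ∏ i, Real.exp (φa (φ i))) := by fun_prop
  rw [wettingMeasure, integral_withDensity_eq_integral_toReal_smul
    hcont.measurable.ennreal_ofReal (.of_forall fun _ => ENNReal.ofReal_lt_top),
    ← integral_const_mul]
  refine integral_congr_ae (.of_forall fun φ => ?_)
  have h0 : 0 ≤ Z⁻¹ * (gaussianWeight φ * ∏ i, Real.exp (φa (φ i))) := by
    unfold gaussianWeight; positivity
  simp only [ENNReal.toReal_ofReal h0, smul_eq_mul]
  ring

lemma exists_exp_bound {φa : ℝ → ℝ} (hφa : Continuous φa) {a : ℝ} (ha : 0 ≤ a)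
    (hsupp : ∀ x, x ∉ Set.Icc 0 a → φa x = 0) :
    ∃ M : ℝ, ∀ x, |Real.exp (φa x)| ≤ M := by
  obtain ⟨M, hM⟩ := isCompact_Icc.exists_bound_of_continuousOn (s := Set.Icc 0 a) hφa.continuousOn
  refine ⟨Real.exp M, fun x => ?_⟩
  rw [abs_of_pos (Real.exp_pos _), Real.exp_le_exp]
  by_cases hx : x ∈ Set.Icc 0 a
  · exact (le_abs_self _).trans (hM x hx)
  · rw [hsupp x hx]
    exact (norm_nonneg _).trans (hM 0 ⟨le_rfl, ha⟩)

lemma prod_erase_insertNth {n : ℕ} (g : ℝ → ℝ) (i : Fin (n + 1)) (b : ℝ) (y : Fin n → ℝ) :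
    ∏ k ∈ Finset.univ.erase i, g (i.insertNth (α := fun _ => ℝ) b y k) =
      ∏ k ∈ Finset.univ.erase i, g (i.insertNth (α := fun _ => ℝ) 0 y k) := by
  refine Finset.prod_congr rfl fun k hk => ?_
  obtain ⟨j, rfl⟩ := Fin.exists_succAbove_eq (Finset.ne_of_mem_erase hk)
  simp

lemma abs_prod_le_pow {ι : Type*} (s : Finset ι) {g : ℝ → ℝ} {M : ℝ} (hM : ∀ x, |g x| ≤ M)
    (φ : ι → ℝ) : |∏ k ∈ s, g (φ k)| ≤ M ^ s.card := by
  rw [Finset.abs_prod, ← Finset.prod_const]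
  exact Finset.prod_le_prod (fun _ _ => abs_nonneg _) fun k _ => hM _

/-- Integration by parts formula for the wetting measure with a strip, with the correct
free-endpoint boundary term `φ_N h_N` (here `h ⟨i-1,_⟩` is the paper's `h_i` for
`1 ≤ i ≤ N`, and `pad h` realizes the conventions `h_0 = h_{N+1} = 0`). -/
theorem ibp_wetting_strip (N : ℕ) (hN : 1 ≤ N) (a : ℝ) (ha : 0 < a)
    (φa : ℝ → ℝ) (hφa_smooth : ContDiff ℝ (⊤ : ℕ∞) φa) (hφa_nonneg : ∀ x, 0 ≤ φa x)
    (hφa_supp : ∀ x, x ∉ Set.Icc 0 a → φa x = 0)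
    (Z : ℝ)
    (hZ : Z = ∫ φ, gaussianWeight φ * ∏ i, Real.exp (φa (φ i))
        ∂(Measure.pi fun _ : Fin N => (volume : Measure ℝ).restrict (Set.Ici 0)))
    (f : (Fin N → ℝ) → ℝ) (hf : ContDiff ℝ 1 f)
    (hf' : ∃ C, ∀ φ, ‖fderiv ℝ f φ‖ ≤ C)
    (h : Fin N → ℝ) :
    (∀ i : Fin N, ContDiffOn ℝ 1 (fun b => sigmaInt N φa Z i f b) (Set.Ici 0)) ∧
    ∫ φ, fderiv ℝ f φ h ∂(wettingMeasure N φa Z) =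
      (∑ i : Fin N, h i *
        ((∫ b in (0 : ℝ)..a, Real.exp (φa b) *
            derivWithin (fun c => sigmaInt N φa Z i f c) (Set.Ici 0) b)
          - sigmaInt N φa Z i f a))
      - ∫ φ, f φ *
          ((∑ i : Fin N, φ i * (pad h (i.1 + 2) + pad h i.1 - 2 * pad h (i.1 + 1)))
            + φ ⟨N - 1, by omega⟩ * h ⟨N - 1, by omega⟩)
        ∂(wettingMeasure N φa Z) := by
  obtain ⟨n, rfl⟩ : ∃ n, N = n + 1 := ⟨N - 1, by omega⟩
  obtain ⟨C, hC⟩ := hf'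
  have hφc : Continuous φa := hφa_smooth.continuous
  have hfd : Differentiable ℝ f := hf.differentiable one_ne_zero
  have hfc : Continuous f := hf.continuous
  have hf'c (v : Fin (n + 1) → ℝ) : Continuous fun φ => fderiv ℝ f φ v :=
    (hf.continuous_fderiv one_ne_zero).clm_apply continuous_const
  obtain ⟨A, hA⟩ := exists_linear_growth hfd hC
  obtain ⟨M, hM⟩ := exists_exp_bound hφc ha.le hφa_supp
  have hZ0 : 0 ≤ Z := by
    rw [hZ]
    exact integral_nonneg fun φ => by unfold gaussianWeight; positivity
  have hρ : GaussianBounded (gaussianWeight (N := n + 1)) := gaussianBounded_gaussianWeight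
  have hfρ : GaussianBounded fun φ => f φ * gaussianWeight φ := hρ.mul_of_linear_growth hA
  have hf'ρ (v : Fin (n + 1) → ℝ) :
      GaussianBounded fun φ => fderiv ℝ f φ v * gaussianWeight φ :=
    hρ.mul_of_linear_growth (A := C * ‖v‖) fun φ => by
      have h1 := (fderiv ℝ f φ).le_of_opNorm_le (hC φ) v
      have h2 := (norm_nonneg _).trans h1
      rw [Real.norm_eq_abs] at h1
      nlinarith [norm_nonneg φ]
  have hEfρ (v : Fin (n + 1) → ℝ) :
      GaussianBounded fun φ => -gradForm φ v * (f φ * gaussianWeight φ) :=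
    hfρ.mul_of_linear_growth fun φ => (abs_neg _).trans_le (abs_gradForm_le φ v)
  let W (i : Fin (n + 1)) (φ : Fin (n + 1) → ℝ) : ℝ :=
    ∏ k ∈ Finset.univ.erase i, Real.exp (φa (φ k))
  have hWc (i : Fin (n + 1)) : Continuous (W i) := by fun_prop
  let G (i : Fin (n + 1)) (φ : Fin (n + 1) → ℝ) : ℝ := f φ * gaussianWeight φ * W i φ
  let D (v φ : Fin (n + 1) → ℝ) : ℝ :=
    fderiv ℝ f φ v * gaussianWeight φ + -gradForm φ v * (f φ * gaussianWeight φ)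
  let G' (i : Fin (n + 1)) (φ : Fin (n + 1) → ℝ) : ℝ := D (Pi.single i 1) φ * W i φ
  have hDc (v) : Continuous (D v) := by
    have := hf'c v
    fun_prop
  have hDb (v) : GaussianBounded (D v) := (hf'ρ v).add (hEfρ v)
  have hGc (i) : Continuous (G i) := by fun_prop
  have hGc' (i) : Continuous (G' i) := (hDc _).mul (hWc i)
  have hW (i) (φ : Fin (n + 1) → ℝ) : |W i φ| ≤ M ^ (Finset.univ.erase i).card :=
    abs_prod_le_pow _ (g := fun x => Real.exp (φa x)) hM φ
  have hGb (i) : GaussianBounded (G i) := hfρ.mul_of_bounded (hW i)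
  have hGb' (i) : GaussianBounded (G' i) := (hDb _).mul_of_bounded (hW i)
  have hGderiv (i : Fin (n + 1)) (b : ℝ) (y : Fin n → ℝ) :
      HasDerivAt (fun b => G i (i.insertNth b y)) (G' i (i.insertNth b y)) b := by
    have hWi (b : ℝ) : W i (i.insertNth b y) = W i (i.insertNth 0 y) :=
      prod_erase_insertNth (fun x => Real.exp (φa x)) i b y
    have h1 := (hfd _).hasFDerivAt.comp_hasDerivAt b (hasDerivAt_insertNth i y b)
    have h2 := (h1.mul (hasDerivAt_gaussianWeight_insertNth i y b)).mul_const
      (W i (i.insertNth 0 y))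
    simp only [G, G', D, hWi]
    refine h2.congr_deriv ?_
    simp only [Function.comp_apply]
    ring
  have hσ (i : Fin (n + 1)) : (fun b => sigmaInt (n + 1) φa Z i f b) = fun b =>
      Z⁻¹ * ∫ y, G i (i.insertNth b y) ∂(orthantMeasure (Fin n)) := by
    funext b
    rw [sigmaInt, integral_pi_dirac i b (hGc i)]
  have hσ' (i : Fin (n + 1)) (b : ℝ) : HasDerivAt (fun b => sigmaInt (n + 1) φa Z i f b)
      (Z⁻¹ * ∫ y, G' i (i.insertNth b y) ∂(orthantMeasure (Fin n))) b := by
    rw [hσ]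
    exact (hasDerivAt_integral_slice i (hGb i) (hGc i) (hGb' i) (hGc' i) (hGderiv i) b).const_mul _
  refine ⟨fun i => ContDiff.contDiffOn (contDiff_one_iff_deriv.2
    ⟨fun b => (hσ' i b).differentiableAt, ?_⟩), ?_⟩
  · rw [funext fun b => (hσ' i b).deriv]
    exact (continuous_integral_slice i (hGb' i) (hGc' i)).const_mul _
  have hprod (i : Fin (n + 1)) (φ : Fin (n + 1) → ℝ) :
      W i φ * Real.exp (φa (φ i)) = ∏ k, Real.exp (φa (φ k)) :=
    Finset.prod_erase_mul _ _ (Finset.mem_univ i)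
  have hPb (φ : Fin (n + 1) → ℝ) :
      |∏ k, Real.exp (φa (φ k))| ≤ M ^ (Finset.univ : Finset (Fin (n + 1))).card :=
    abs_prod_le_pow _ (g := fun x => Real.exp (φa x)) hM φ
  have hcoord (i : Fin (n + 1)) : (∫ b in (0 : ℝ)..a, Real.exp (φa b) *
        derivWithin (fun c => sigmaInt (n + 1) φa Z i f c) (Set.Ici 0) b) -
      sigmaInt (n + 1) φa Z i f a = Z⁻¹ * ∫ φ, D (Pi.single i 1) φ *
        ∏ k, Real.exp (φa (φ k)) ∂(orthantMeasure (Fin (n + 1))) := by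
    have hibp := integral_weight_mul_deriv i (hGb i) (hGc i) (hGb' i) (hGc' i) (hGderiv i)
      (w := fun x => Real.exp (φa x)) (by fun_prop) hM ha.le fun x hx => by
        rw [hφa_supp x fun hx' => absurd hx'.2 (not_le.2 hx), Real.exp_zero]
    simp only [G', mul_assoc, hprod] at hibp
    rw [hibp, mul_sub, ← congrFun (hσ i) a, ← intervalIntegral.integral_const_mul]
    congr 1
    refine intervalIntegral.integral_congr fun b hb => ?_
    rw [Set.uIcc_of_le ha.le] at hb
    simp only [(hσ' i b).hasDerivWithinAt.derivWithin (uniqueDiffOn_Ici 0 b hb.1)]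
    simp only [G']
    ring
  have hDint (v) : Integrable (fun φ => D v φ * ∏ k, Real.exp (φa (φ k)))
      (orthantMeasure (Fin (n + 1))) :=
    ((hDb v).mul_of_bounded hPb).integrable ((hDc v).mul (by fun_prop))
  have hDsum (φ : Fin (n + 1) → ℝ) : D h φ = ∑ i, h i * D (Pi.single i 1) φ := by
    have hlin : fderiv ℝ f φ h = ∑ i, h i * fderiv ℝ f φ (Pi.single i 1) := by
      conv_lhs => rw [pi_eq_sum_univ' h, map_sum]
      simp
    simp only [D, hlin, gradForm_eq_sum φ h, mul_add, Finset.sum_add_distrib, Finset.sum_mul,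
      ← Finset.sum_neg_distrib]
    congr 1 <;> exact Finset.sum_congr rfl fun i _ => by ring
  have hsum : ∑ i, h i * (Z⁻¹ * ∫ φ, D (Pi.single i 1) φ * ∏ k, Real.exp (φa (φ k))
        ∂(orthantMeasure (Fin (n + 1)))) =
      Z⁻¹ * ∫ φ, D h φ * ∏ k, Real.exp (φa (φ k)) ∂(orthantMeasure (Fin (n + 1))) := by
    simp only [hDsum, Finset.sum_mul, mul_assoc]
    rw [integral_finsetSum _ fun i _ => (hDint _).const_mul _, Finset.mul_sum]
    exact Finset.sum_congr rfl fun i _ => by rw [integral_const_mul]; ring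
  rw [Finset.sum_congr rfl fun i _ => congrArg (h i * ·) (hcoord i), hsum,
    integral_wettingMeasure hφc hZ0, integral_wettingMeasure hφc hZ0, ← mul_sub,
    ← integral_sub (hDint h)]
  · congr 2
    funext φ
    have hg := neg_gradForm_eq φ h
    change _ = _ - f φ * (_ + φ (Fin.last n) * h (Fin.last n)) * _
    rw [← hg]
    simp only [D]
    ring
  · have hg (φ : Fin (n + 1) → ℝ) := neg_gradForm_eq φ h
    refine (((hEfρ h).mul_of_bounded hPb).integrable (by fun_prop)).congr (.of_forall fun φ => ?_)
    change _ = f φ * (_ + φ (Fin.last n) * h (Fin.last n)) * _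
    rw [← hg]
    ring
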